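/- arXiv:2401.17442 — 3 statements merged into one kernel-verified Lean document; each statement's English description precedes it below -/
import Mathlib

section
/- Let m ≥ 1, x > 0, and let w, f₁, …, f_m : [0, x] → ℝ be measurable functions such that y ↦ y^{i−1} w(y) f_j(y) is integrable on [0, x] for all 1 ≤ i, j ≤ m. Then the integral over the ordered region {0 < y₁ < y₂ < ⋯ < y_m < x} of det[y_i^{j−1}]_{i,j=1,…,m} · det[f_j(y_i)]_{i,j=1,…,m} · ∏_{k=1}^m w(y_k) with respect to dy₁⋯dy_m equals det[ ∫₀ˣ y^{i−1} f_j(y) w(y) dy ]_{i,j=1,…,m}. -/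
open MeasureTheory

/-!
Expanding `det[ψ_j(y_i)]` over permutations and absorbing each sign into `det[φ_j(y_i)]` by
permuting its rows, the integrand becomes `∑ σ, H (y ∘ σ)` with `H y = det[φ_j(y_i)] ∏ ψ_i(y_i)`.
Permuting coordinates preserves the product measure, and `H` vanishes at points with a repeated
coordinate, so the integral over increasing tuples equals the integral of `H` over the whole space.
Column `j` of the determinant `H y = det[φ_i(y_j) ψ_j(y_j)]` involves `y_j` only, so it can be
integrated entrywise.
-/

section Determinants

open Matrix

variable {ι α R : Type*} [Fintype ι] [DecidableEq ι] [CommRing R]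

/-- The alternant matrix `[φ_j(y_i)]` of the functions `φ` at the points `y`: rows are indexed by
points and columns by functions, so that `φ_j(t) = t ^ j` gives the Vandermonde matrix. -/
def alternant (φ : ι → α → R) (y : ι → α) : Matrix ι ι R :=
  of fun i j => φ j (y i)

lemma det_alternant_comp_perm (φ : ι → α → R) (y : ι → α) (σ : Equiv.Perm ι) :
    (alternant φ (y ∘ σ)).det = Equiv.Perm.sign σ * (alternant φ y).det :=
  det_permute σ (alternant φ y)

lemma det_alternant_of_not_injective (φ : ι → α → R) {y : ι → α} (hy : ¬ Function.Injective y) :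
    (alternant φ y).det = 0 := by
  obtain ⟨i, j, hij, hne⟩ := Function.not_injective_iff.1 hy
  exact det_zero_of_row_eq hne (funext fun k => congrArg (φ k) hij)

lemma det_alternant_mul_det_alternant (φ ψ : ι → α → R) (y : ι → α) :
    (alternant φ y).det * (alternant ψ y).det
      = ∑ σ : Equiv.Perm ι, (alternant φ (y ∘ σ)).det * ∏ i, ψ i ((y ∘ σ) i) := by
  rw [det_apply' (alternant ψ y), Finset.mul_sum]
  refine Finset.sum_congr rfl fun σ _ => ?_
  rw [det_alternant_comp_perm, mul_left_comm, mul_assoc]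
  rfl

lemma det_alternant_mul_prod (φ ψ : ι → α → R) (y : ι → α) :
    (alternant φ y).det * ∏ i, ψ i (y i) = (of fun i j => φ i (y j) * ψ j (y j)).det := by
  rw [mul_comm, ← det_transpose, ← det_mul_row]
  simp only [alternant, transpose_apply, of_apply, mul_comm]

end Determinants

section IntegralOfDeterminant

variable {ι 𝕜 : Type*} [Fintype ι] [DecidableEq ι] [RCLike 𝕜] {E : ι → Type*}
  [∀ j, MeasurableSpace (E j)] {μ : ∀ j, Measure (E j)} [∀ j, SigmaFinite (μ j)]
  {g : ∀ _ j : ι, E j → 𝕜}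

lemma integrable_det_pi (hg : ∀ i j, Integrable (g i j) (μ j)) :
    Integrable (fun y => (Matrix.of fun i j => g i j (y j)).det) (Measure.pi μ) := by
  simp only [Matrix.det_apply', Matrix.of_apply]
  exact integrable_finsetSum _ fun σ _ =>
    (Integrable.fintype_prod_dep fun j => hg (σ j) j).const_mul _

lemma integral_det_pi (hg : ∀ i j, Integrable (g i j) (μ j)) :
    ∫ y, (Matrix.of fun i j => g i j (y j)).det ∂Measure.pi μ
      = (Matrix.of fun i j => ∫ t, g i j t ∂μ j).det := by
  simp only [Matrix.det_apply', Matrix.of_apply]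
  rw [integral_finsetSum _ fun σ _ =>
    (Integrable.fintype_prod_dep fun j => hg (σ j) j).const_mul _]
  simp only [integral_const_mul, integral_fintype_prod_eq_prod]

end IntegralOfDeterminant

section IncreasingTuples

lemma strictMono_comp_perm_iff_eq_sort {n : ℕ} {α : Type*} [LinearOrder α] {y : Fin n → α}
    (hy : Function.Injective y) (σ : Equiv.Perm (Fin n)) :
    StrictMono (y ∘ σ) ↔ σ = Tuple.sort y := by
  constructor
  · intro hσ
    have hcomp := Tuple.unique_monotone hσ.monotone (Tuple.monotone_sort y)
    exact Equiv.ext fun i => hy (congrFun hcomp i)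
  · rintro rfl
    exact (Tuple.monotone_sort y).strictMono_of_injective (hy.comp (Tuple.sort y).injective)

lemma sum_indicator_strictMono_comp_perm {n : ℕ} {α M : Type*} [LinearOrder α] [AddCommMonoid M]
    {H : (Fin n → α) → M} (hH : ∀ y, ¬ Function.Injective y → H y = 0) (y : Fin n → α) :
    ∑ σ : Equiv.Perm (Fin n), {z | StrictMono (z ∘ σ)}.indicator H y = H y := by
  classical
  by_cases hy : Function.Injective y
  · simp [Set.indicator_apply, strictMono_comp_perm_iff_eq_sort hy]
  · simp [Set.indicator_apply, hH y hy]

lemma measurePreserving_comp_equiv {ι ι' α : Type*} [Fintype ι] [Fintype ι'] [MeasurableSpace α]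
    (μ : Measure α) [SigmaFinite μ] (e : ι' ≃ ι) :
    MeasurePreserving (fun y : ι → α => y ∘ e) (Measure.pi fun _ => μ) (Measure.pi fun _ => μ) :=
  measurePreserving_arrowCongr' (fun _ => μ) (fun _ => μ) e.symm (.refl α) fun _ => .id μ

lemma measurableEmbedding_comp_equiv {ι ι' α : Type*} [MeasurableSpace α] (e : ι' ≃ ι) :
    MeasurableEmbedding fun y : ι → α => y ∘ e :=
  (MeasurableEquiv.arrowCongr' e.symm (.refl α)).measurableEmbedding

variable {α : Type*} [LinearOrder α] [TopologicalSpace α] [OrderClosedTopology α]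
  [SecondCountableTopology α] [MeasurableSpace α] [OpensMeasurableSpace α]

lemma measurableSet_strictMono {ι : Type*} [Countable ι] [Preorder ι] :
    MeasurableSet {y : ι → α | StrictMono y} := by
  simp only [StrictMono, Set.ofPred_forall]
  exact .iInter fun i => .iInter fun j => .iInter fun _ =>
    measurableSet_lt (measurable_pi_apply i) (measurable_pi_apply j)

variable {E : Type*} [NormedAddCommGroup E] [NormedSpace ℝ E] {n : ℕ} {H : (Fin n → α) → E}
  {μ : Measure α} [SigmaFinite μ]

lemma setIntegral_strictMono_sum_comp_perm (hH : Integrable H (Measure.pi fun _ => μ))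
    (hH₀ : ∀ y, ¬ Function.Injective y → H y = 0) :
    ∫ y in {y | StrictMono y}, ∑ σ : Equiv.Perm (Fin n), H (y ∘ σ) ∂Measure.pi (fun _ => μ)
      = ∫ y, H y ∂Measure.pi fun _ => μ := by
  have hmeas (σ : Equiv.Perm (Fin n)) : MeasurableSet {y : Fin n → α | StrictMono (y ∘ σ)} :=
    (measurableEmbedding_comp_equiv σ).measurable measurableSet_strictMono
  have hchange (σ : Equiv.Perm (Fin n)) :
      ∫ y in {y | StrictMono y}, H (y ∘ σ) ∂Measure.pi (fun _ => μ)
        = ∫ y in {y | StrictMono (y ∘ σ.symm)}, H y ∂Measure.pi (fun _ => μ) := by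
    simpa only [Set.preimage_ofPred_eq, Function.comp_assoc, Equiv.self_comp_symm,
      Function.comp_id] using (measurePreserving_comp_equiv μ σ).setIntegral_preimage_emb
        (measurableEmbedding_comp_equiv σ) H {y | StrictMono (y ∘ σ.symm)}
  calc ∫ y in {y | StrictMono y}, ∑ σ : Equiv.Perm (Fin n), H (y ∘ σ) ∂Measure.pi (fun _ => μ)
      = ∑ σ : Equiv.Perm (Fin n),
          ∫ y in {y | StrictMono y}, H (y ∘ σ) ∂Measure.pi (fun _ => μ) :=
        integral_finsetSum _ fun σ _ =>
          ((measurePreserving_comp_equiv μ σ).integrable_comp_of_integrable hH).integrableOn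
    _ = ∑ σ : Equiv.Perm (Fin n),
          ∫ y in {y | StrictMono (y ∘ σ)}, H y ∂Measure.pi (fun _ => μ) := by
        simp only [hchange]
        exact Equiv.sum_comp (Equiv.inv _) fun σ : Equiv.Perm (Fin n) =>
          ∫ y in {y | StrictMono (y ∘ σ)}, H y ∂Measure.pi (fun _ => μ)
    _ = ∫ y, ∑ σ : Equiv.Perm (Fin n), {z | StrictMono (z ∘ σ)}.indicator H y
          ∂Measure.pi (fun _ => μ) := by
        rw [integral_finsetSum _ fun σ _ => hH.indicator (hmeas σ)]
        simp only [integral_indicator (hmeas _)]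
    _ = ∫ y, H y ∂Measure.pi fun _ => μ := by
        simp only [sum_indicator_strictMono_comp_perm hH₀]

end IncreasingTuples

section Andreief

variable {α 𝕜 : Type*} [LinearOrder α] [TopologicalSpace α] [OrderClosedTopology α]
  [SecondCountableTopology α] [MeasurableSpace α] [OpensMeasurableSpace α] [RCLike 𝕜] {m : ℕ}

-- For counting measure on a finite type this is the Cauchy–Binet formula.
theorem setIntegral_strictMono_det_alternant_mul_det_alternant {μ : Measure α} [SigmaFinite μ]
    {φ ψ : Fin m → α → 𝕜} (hφψ : ∀ i j, Integrable (fun t => φ i t * ψ j t) μ) :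
    ∫ y in {y | StrictMono y}, (alternant φ y).det * (alternant ψ y).det ∂Measure.pi (fun _ => μ)
      = (Matrix.of fun i j => ∫ t, φ i t * ψ j t ∂μ).det := by
  let H (y : Fin m → α) : 𝕜 := (alternant φ y).det * ∏ i, ψ i (y i)
  have hH : H = fun y => (Matrix.of fun i j => φ i (y j) * ψ j (y j)).det :=
    funext (det_alternant_mul_prod φ ψ)
  have hH_int : Integrable H (Measure.pi fun _ => μ) := hH ▸ integrable_det_pi hφψ
  have hH_ties (y : Fin m → α) (hy : ¬ Function.Injective y) : H y = 0 := by
    simp only [H, det_alternant_of_not_injective φ hy, zero_mul]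
  calc ∫ y in {y | StrictMono y}, (alternant φ y).det * (alternant ψ y).det
          ∂Measure.pi (fun _ => μ)
      = ∫ y in {y | StrictMono y}, ∑ σ : Equiv.Perm (Fin m), H (y ∘ σ)
          ∂Measure.pi (fun _ => μ) := by
        simp only [det_alternant_mul_det_alternant, H]
    _ = ∫ y, H y ∂Measure.pi fun _ => μ := setIntegral_strictMono_sum_comp_perm hH_int hH_ties
    _ = (Matrix.of fun i j => ∫ t, φ i t * ψ j t ∂μ).det := by
        rw [hH, integral_det_pi hφψ]

theorem andreief_identity_general (μ : Measure α) [SigmaFinite μ] (s : Set α)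
    (φ f : Fin m → α → 𝕜) (w : α → 𝕜)
    (hint : ∀ i j, IntegrableOn (fun t => φ i t * w t * f j t) s μ) :
    ∫ y in {y : Fin m → α | StrictMono y ∧ ∀ k, y k ∈ s},
        (alternant φ y).det * (alternant f y).det * ∏ k, w (y k) ∂Measure.pi (fun _ => μ)
      = (Matrix.of fun i j => ∫ t in s, φ i t * f j t * w t ∂μ).det := by
  have hregion : {y : Fin m → α | StrictMono y ∧ ∀ k, y k ∈ s}
      = {y | StrictMono y} ∩ Set.univ.pi fun _ => s := by
    ext y; simp
  have hweight (y : Fin m → α) : (alternant f y).det * ∏ k, w (y k)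
      = (alternant (fun j t => w t * f j t) y).det := by
    rw [mul_comm]
    exact (Matrix.det_mul_column (fun k => w (y k)) (alternant f y)).symm
  rw [hregion, ← Measure.restrict_restrict measurableSet_strictMono, Measure.restrict_pi_pi]
  simp only [mul_assoc, hweight]
  rw [setIntegral_strictMono_det_alternant_mul_det_alternant fun i j => by
    simpa only [IntegrableOn, mul_assoc] using hint i j]
  simp only [mul_comm (w _)]

end Andreief

/-- Andréief-type integration identity (Corollary 2 of Chiani): the integral over the
ordered region `{0 < y₁ < ⋯ < y_m < x}` of the product of the Vandermonde determinant
`det[y_i^{j−1}]`, the determinant `det[f_j(y_i)]`, and the weights `∏ w(y_k)` equals the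
determinant of one-dimensional integrals `det[∫₀ˣ y^{i−1} f_j(y) w(y) dy]`. -/
theorem andreief_identity (m : ℕ) (hm : 1 ≤ m) (x : ℝ) (hx : 0 < x)
    (w : ℝ → ℝ) (f : Fin m → ℝ → ℝ)
    (hw : Measurable w) (hf : ∀ j, Measurable (f j))
    (hint : ∀ i j : Fin m,
      IntegrableOn (fun y => y ^ (i : ℕ) * w y * f j y) (Set.Ioc 0 x)) :
    (∫ y in {y : Fin m → ℝ | StrictMono y ∧ ∀ k, y k ∈ Set.Ioo 0 x},
        (Matrix.det (Matrix.of fun i j : Fin m => y i ^ (j : ℕ)))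
          * (Matrix.det (Matrix.of fun i j : Fin m => f j (y i)))
          * ∏ k, w (y k))
      = Matrix.det (Matrix.of fun i j : Fin m =>
          ∫ y in Set.Ioc (0 : ℝ) x, y ^ (i : ℕ) * f j y * w y) := by
  simpa only [alternant, volume_pi, integral_Ioc_eq_integral_Ioo] using
    andreief_identity_general volume (Set.Ioo 0 x)
      (fun i t => t ^ (i : ℕ)) f w fun i j => (hint i j).mono_set Set.Ioo_subset_Ioc_self
end

section
/- Let a be a real number, b > 0, c > 0, α a nonnegative integer, x ∈ (0,1), and ℓ a nonnegative integer. Define φ(θ) = ∫₀ˣ y^{c−1} (1−y)^α ₁F₁(a; b; θy) dy for θ ∈ ℝ. Then φ is ℓ-times differentiable at θ = 0 and its ℓ-th derivative at θ = 0 equals ((a)_ℓ/(b)_ℓ) ∫₀ˣ y^{c+ℓ−1} (1−y)^α dy. -/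
open MeasureTheory

/-- The rising factorial `(a)_k = a(a+1)⋯(a+k−1)`, with `(a)_0 = 1`. -/
noncomputable def risingFactorial (a : ℝ) (k : ℕ) : ℝ :=
  ∏ i ∈ Finset.range k, (a + i)

/-- The confluent hypergeometric function `₁F₁(a; b; z) = ∑ (a)_k/((b)_k k!) z^k`. -/
noncomputable def oneF1 (a b z : ℝ) : ℝ :=
  ∑' k : ℕ, risingFactorial a k / (risingFactorial b k * (k.factorial : ℝ)) * z ^ k

/-!
Since the confluent hypergeometric series is entire and the weight is integrable over a bounded
interval, the series may be integrated term by term, for every `θ`. So `φ` is a power series in `θ`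
whose coefficients are moments of the weight, and its derivatives at `0` are read off from them.
-/

open Filter Topology

theorem iteratedDeriv_eq_factorial_smul_coeff {𝕜 E : Type*} [NontriviallyNormedField 𝕜]
    [NormedAddCommGroup E] [NormedSpace 𝕜 E] [CompleteSpace E] {f : 𝕜 → E}
    {p : FormalMultilinearSeries 𝕜 𝕜 E} {z : 𝕜} (hp : HasFPowerSeriesAt f p z) (n : ℕ) :
    iteratedDeriv n f z = n.factorial • p.coeff n := by
  obtain ⟨r, hr⟩ := hp
  rw [iteratedDeriv_eq_iteratedFDeriv]
  exact (hr.factorial_smul 1 n).symm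

section Moments

variable {Ω 𝕜 : Type*} [MeasurableSpace Ω] [RCLike 𝕜] {μ : Measure Ω} {w X : Ω → 𝕜} {R : ℝ}
  {A : ℕ → 𝕜}

theorem integrable_mul_pow (hw : Integrable w μ) (hX : AEStronglyMeasurable X μ)
    (hR : ∀ᵐ ω ∂μ, ‖X ω‖ ≤ R) (k : ℕ) : Integrable (fun ω => w ω * X ω ^ k) μ := by
  refine hw.mul_bdd (c := R ^ k) (hX.pow k) ?_
  filter_upwards [hR] with ω hω
  rw [norm_pow]
  gcongr

theorem integral_norm_mul_pow_le (hw : Integrable w μ) (hX : AEStronglyMeasurable X μ)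
    (hR : ∀ᵐ ω ∂μ, ‖X ω‖ ≤ R) (k : ℕ) : ∫ ω, ‖w ω * X ω ^ k‖ ∂μ ≤ R ^ k * ∫ ω, ‖w ω‖ ∂μ := by
  rw [← integral_const_mul]
  refine integral_mono_ae (integrable_mul_pow hw hX hR k).norm (hw.norm.const_mul _) ?_
  filter_upwards [hR] with ω hω
  rw [norm_mul, norm_pow, mul_comm]
  gcongr

theorem hasSum_integral_mul_tsum_mul_pow (hw : Integrable w μ) (hX : AEStronglyMeasurable X μ)
    (hR : ∀ᵐ ω ∂μ, ‖X ω‖ ≤ R) {θ : 𝕜} (hA : Summable fun k => ‖A k‖ * (‖θ‖ * R) ^ k) :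
    HasSum (fun k => θ ^ k * (A k * ∫ ω, w ω * X ω ^ k ∂μ))
      (∫ ω, w ω * ∑' k, A k * (θ * X ω) ^ k ∂μ) := by
  let F : ℕ → Ω → 𝕜 := fun k ω => θ ^ k * A k * (w ω * X ω ^ k)
  have hF_int (k : ℕ) : Integrable (F k) μ := (integrable_mul_pow hw hX hR k).const_mul _
  have hF_sum : Summable fun k => ∫ ω, ‖F k ω‖ ∂μ := by
    refine (hA.mul_right (∫ ω, ‖w ω‖ ∂μ)).of_nonneg_of_le
      (fun k => integral_nonneg fun ω => norm_nonneg _) fun k => ?_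
    calc ∫ ω, ‖F k ω‖ ∂μ = ‖θ‖ ^ k * ‖A k‖ * ∫ ω, ‖w ω * X ω ^ k‖ ∂μ := by
          rw [← integral_const_mul]
          simp only [F, norm_mul, norm_pow]
      _ ≤ ‖θ‖ ^ k * ‖A k‖ * (R ^ k * ∫ ω, ‖w ω‖ ∂μ) := by
          gcongr
          exact integral_norm_mul_pow_le hw hX hR k
      _ = ‖A k‖ * (‖θ‖ * R) ^ k * ∫ ω, ‖w ω‖ ∂μ := by ring
  have h_moment (k : ℕ) : ∫ ω, F k ω ∂μ = θ ^ k * (A k * ∫ ω, w ω * X ω ^ k ∂μ) := by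
    rw [integral_const_mul, mul_assoc]
  have h_tsum (ω : Ω) : ∑' k, F k ω = w ω * ∑' k, A k * (θ * X ω) ^ k := by
    rw [← tsum_mul_left]
    refine tsum_congr fun k => ?_
    ring
  simpa only [h_moment, h_tsum] using hasSum_integral_of_summable_integral_norm hF_int hF_sum

theorem hasFPowerSeriesAt_integral_mul_tsum_mul_pow (hw : Integrable w μ)
    (hX : AEStronglyMeasurable X μ) (hR : ∀ᵐ ω ∂μ, ‖X ω‖ ≤ R)
    (hA : ∀ r : ℝ, Summable fun k => ‖A k‖ * r ^ k) :
    HasFPowerSeriesAt (fun θ => ∫ ω, w ω * ∑' k, A k * (θ * X ω) ^ k ∂μ)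
      (.ofScalars 𝕜 fun k => A k * ∫ ω, w ω * X ω ^ k ∂μ) 0 := by
  rw [hasFPowerSeriesAt_iff']
  refine .of_forall fun θ => ?_
  simpa only [FormalMultilinearSeries.coeff_ofScalars, sub_zero, smul_eq_mul] using
    hasSum_integral_mul_tsum_mul_pow hw hX hR (hA _)

end Moments

/-- The coefficient `(a)_k / ((b)_k k!)` of `z ^ k` in the series of `₁F₁(a; b; z)`. -/
noncomputable def oneF1Coeff (a b : ℝ) (k : ℕ) : ℝ :=
  risingFactorial a k / (risingFactorial b k * (k.factorial : ℝ))

theorem oneF1_eq_tsum (a b z : ℝ) : oneF1 a b z = ∑' k, oneF1Coeff a b k * z ^ k := rfl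

theorem factorial_mul_oneF1Coeff (a b : ℝ) (k : ℕ) :
    (k.factorial : ℝ) * oneF1Coeff a b k = risingFactorial a k / risingFactorial b k := by
  rw [oneF1Coeff, mul_comm (risingFactorial b k), ← div_div, div_right_comm,
    mul_div_cancel₀ _ (by positivity)]

theorem oneF1Coeff_succ (a b : ℝ) (k : ℕ) :
    oneF1Coeff a b (k + 1) = (a + k) / (b + k) / (k + 1) * oneF1Coeff a b k := by
  simp only [oneF1Coeff, risingFactorial, Finset.prod_range_succ, Nat.factorial_succ,
    Nat.cast_mul, Nat.cast_succ, div_eq_mul_inv, mul_inv]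
  ring

theorem tendsto_oneF1Coeff_ratio (a b : ℝ) :
    Tendsto (fun k : ℕ => (a + k) / (b + k) / (k + 1)) atTop (𝓝 0) := by
  have h_quot : Tendsto (fun k : ℕ => (a + k) / (b + k)) atTop (𝓝 1) := by
    simpa using tendsto_add_mul_div_add_mul_atTop_nhds a b (1 : ℝ) one_ne_zero
  simpa [div_eq_mul_inv] using h_quot.mul (tendsto_one_div_add_atTop_nhds_zero_nat (𝕜 := ℝ))

theorem summable_norm_oneF1Coeff_mul_pow (a b r : ℝ) :
    Summable fun k => ‖oneF1Coeff a b k‖ * r ^ k := by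
  have h_ratio : ∀ᶠ k : ℕ in atTop, ‖(a + k) / (b + k) / (k + 1) * r‖ < 1 / 2 := by
    have h_lim := ((tendsto_oneF1Coeff_ratio a b).mul_const r).norm
    rw [zero_mul, norm_zero] at h_lim
    exact h_lim.eventually_lt_const one_half_pos
  refine summable_of_ratio_norm_eventually_le one_half_lt_one ?_
  filter_upwards [h_ratio] with k hk
  calc ‖‖oneF1Coeff a b (k + 1)‖ * r ^ (k + 1)‖
      = ‖(a + k) / (b + k) / (k + 1) * r‖ * ‖‖oneF1Coeff a b k‖ * r ^ k‖ := by
        simp only [oneF1Coeff_succ, norm_mul, norm_norm, pow_succ]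
        ring
    _ ≤ 1 / 2 * ‖‖oneF1Coeff a b k‖ * r ^ k‖ := by gcongr

theorem integrableOn_rpow_mul_one_sub_pow {c : ℝ} (hc : 0 < c) (α : ℕ) (x : ℝ) :
    IntegrableOn (fun y : ℝ => y ^ (c - 1) * (1 - y) ^ α) (Set.Ioc 0 x) :=
  ((intervalIntegral.intervalIntegrable_rpow' (by linarith)).mul_continuousOn (by fun_prop)).1

theorem setIntegral_rpow_mul_mul_pow (c x : ℝ) (g : ℝ → ℝ) (k : ℕ) :
    ∫ y in Set.Ioc 0 x, y ^ (c - 1) * g y * y ^ k = ∫ y in Set.Ioc 0 x, y ^ (c + k - 1) * g y := by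
  refine setIntegral_congr_fun measurableSet_Ioc fun y hy => ?_
  simp only [add_sub_right_comm, Real.rpow_add_natCast hy.1.ne']
  ring

theorem deriv_phi_at_zero_general (a : ℝ) {b : ℝ} (_hb : ∀ n : ℕ, b + n ≠ 0) {c x : ℝ} {g : ℝ → ℝ}
    (hg : IntegrableOn (fun y => y ^ (c - 1) * g y) (Set.Ioc 0 x)) {φ : ℝ → ℝ}
    (hφ : ∀ θ, φ θ = ∫ y in Set.Ioc 0 x, y ^ (c - 1) * g y * oneF1 a b (θ * y)) :
    AnalyticAt ℝ φ 0 ∧ ∀ ℓ : ℕ, iteratedDeriv ℓ φ 0 =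
      risingFactorial a ℓ / risingFactorial b ℓ * ∫ y in Set.Ioc 0 x, y ^ (c + ℓ - 1) * g y := by
  have h_bound : ∀ᵐ y ∂volume.restrict (Set.Ioc 0 x), ‖y‖ ≤ x :=
    ae_restrict_of_forall_mem measurableSet_Ioc fun y hy =>
      (Real.norm_of_nonneg hy.1.le).trans_le hy.2
  have h_series := hasFPowerSeriesAt_integral_mul_tsum_mul_pow hg (by fun_prop) h_bound
    (summable_norm_oneF1Coeff_mul_pow a b)
  simp only [← oneF1_eq_tsum, ← hφ] at h_series
  refine ⟨h_series.analyticAt, fun ℓ => ?_⟩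
  rw [iteratedDeriv_eq_factorial_smul_coeff h_series, FormalMultilinearSeries.coeff_ofScalars,
    nsmul_eq_mul, ← mul_assoc, factorial_mul_oneF1Coeff, setIntegral_rpow_mul_mul_pow]

/-- The ℓ-th derivative at `θ = 0` of `φ(θ) = ∫₀ˣ y^{c−1}(1−y)^α ₁F₁(a;b;θy) dy` equals
`((a)_ℓ/(b)_ℓ) ∫₀ˣ y^{c+ℓ−1}(1−y)^α dy`. -/
theorem deriv_phi_at_zero (a b c : ℝ) (hb : 0 < b) (hc : 0 < c)
    (α : ℕ) (x : ℝ) (hx : x ∈ Set.Ioo (0 : ℝ) 1) (ℓ : ℕ)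
    (φ : ℝ → ℝ)
    (hφ : ∀ θ : ℝ, φ θ =
      ∫ y in Set.Ioc (0 : ℝ) x, y ^ (c - 1) * (1 - y) ^ α * oneF1 a b (θ * y)) :
    ContDiffAt ℝ ℓ φ 0 ∧
      iteratedDeriv ℓ φ 0 =
        risingFactorial a ℓ / risingFactorial b ℓ *
          ∫ y in Set.Ioc (0 : ℝ) x, y ^ (c + ℓ - 1) * (1 - y) ^ α := by
  have h_phi := deriv_phi_at_zero_general a (fun n => by positivity)
    (integrableOn_rpow_mul_one_sub_pow hc α x) hφ
  exact ⟨h_phi.1.contDiffAt, h_phi.2 ℓ⟩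
end

section
/- Let c₁, c₂ ∈ (0,1), set r = √(c₁ + c₂ − c₁c₂), and let γ be real with γ > (c₂ + r)/(1 − c₂). Then (γ + c₁)(1 + γ)/(γ − (1+γ)c₂) > ((1 + r)/(1 − c₂))². -/
/-!
Let `t = γ - (1 + γ) c₂` be the denominator of `ν(γ)`. Then `1 + t = (1 + γ) (1 - c₂)`, and
`r² = c₁ + c₂ - c₁ c₂` turns `(γ + c₁) (1 - c₂)` into `t + r²`, so `ν(γ)` is
`(t + r²) (1 + t) / t` divided by `(1 - c₂)²`. Since `(t + r²) (1 + t) = (1 + r)² t + (t - r)²`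
and `t - r = (1 - c₂) (γ - γ_p)`, the gap `ν(γ) - μ` is exactly `(γ - γ_p)² / t`.
-/

section Field

variable {K : Type*} [Field K]

/-- The phase-transition threshold `γ_p` for the spike. Here and in `bulkEdge`, `r` is a parameter
standing for a square root of `c₁ + c₂ - c₁ * c₂`. The value at `c₂ = 1` is junk. -/
def phaseThreshold (c₂ r : K) : K := (c₂ + r) / (1 - c₂)

/-- The bulk edge `μ`: the limit of the leading eigenvalue under the null. The value
at `c₂ = 1` is junk. -/
def bulkEdge (c₂ r : K) : K := ((1 + r) / (1 - c₂)) ^ 2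

/-- The denominator of the spiked limit `ν(γ)`, which is the natural parameter for comparing the
spiked limit with the bulk edge. -/
def spikedDenom (c₂ γ : K) : K := γ - (1 + γ) * c₂

/-- The spiked limit `ν(γ)`: the limit of the leading eigenvalue under the alternative with spike
`γ`. The value is junk where `spikedDenom c₂ γ = 0`. -/
def spikedLimit (c₁ c₂ γ : K) : K := (γ + c₁) * (1 + γ) / spikedDenom c₂ γ

theorem spikedDenom_one (γ : K) : spikedDenom 1 γ = -1 := by
  unfold spikedDenom
  ring

theorem spikedDenom_sub_eq_mul_sub_phaseThreshold {c₂ : K} (hc₂ : c₂ ≠ 1) (r γ : K) :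
    spikedDenom c₂ γ - r = (1 - c₂) * (γ - phaseThreshold c₂ r) := by
  rw [phaseThreshold, mul_sub, mul_div_cancel₀ _ (sub_ne_zero.2 hc₂.symm), spikedDenom]
  ring

theorem spikedLimit_eq_div_sq_mul_spikedDenom {c₁ c₂ r : K} (hc₂ : c₂ ≠ 1)
    (hr : r ^ 2 = c₁ + c₂ - c₁ * c₂) (γ : K) :
    spikedLimit c₁ c₂ γ =
      (spikedDenom c₂ γ + r ^ 2) * (1 + spikedDenom c₂ γ) /
        ((1 - c₂) ^ 2 * spikedDenom c₂ γ) := by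
  have left_factor : spikedDenom c₂ γ + r ^ 2 = (1 - c₂) * (γ + c₁) := by
    rw [hr, spikedDenom]
    ring
  have right_factor : 1 + spikedDenom c₂ γ = (1 - c₂) * (1 + γ) := by
    rw [spikedDenom]
    ring
  rw [left_factor, right_factor, mul_mul_mul_comm, ← sq,
    mul_div_mul_left _ _ (pow_ne_zero 2 (sub_ne_zero.2 hc₂.symm)), spikedLimit]

theorem spikedLimit_sub_bulkEdge {c₁ c₂ r γ : K} (hc₂ : c₂ ≠ 1)
    (hr : r ^ 2 = c₁ + c₂ - c₁ * c₂) (ht : spikedDenom c₂ γ ≠ 0) :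
    spikedLimit c₁ c₂ γ - bulkEdge c₂ r = (γ - phaseThreshold c₂ r) ^ 2 / spikedDenom c₂ γ := by
  have hd : (1 - c₂) ^ 2 ≠ 0 := pow_ne_zero 2 (sub_ne_zero.2 hc₂.symm)
  calc
    _ = (spikedDenom c₂ γ + r ^ 2) * (1 + spikedDenom c₂ γ) / ((1 - c₂) ^ 2 * spikedDenom c₂ γ) -
          (1 + r) ^ 2 * spikedDenom c₂ γ / ((1 - c₂) ^ 2 * spikedDenom c₂ γ) := by
      rw [spikedLimit_eq_div_sq_mul_spikedDenom hc₂ hr, mul_div_mul_right _ _ ht, bulkEdge, div_pow]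
    _ = (spikedDenom c₂ γ - r) ^ 2 / ((1 - c₂) ^ 2 * spikedDenom c₂ γ) := by ring
    _ = (γ - phaseThreshold c₂ r) ^ 2 / spikedDenom c₂ γ := by
      rw [spikedDenom_sub_eq_mul_sub_phaseThreshold hc₂, mul_pow, mul_div_mul_left _ _ hd]

end Field

section OrderedField

variable {K : Type*} [Field K] [LinearOrder K] [IsStrictOrderedRing K]

theorem lt_spikedDenom_of_phaseThreshold_lt {c₂ r γ : K} (hc₂ : c₂ < 1)
    (hγ : phaseThreshold c₂ r < γ) : r < spikedDenom c₂ γ := by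
  rw [← sub_pos, spikedDenom_sub_eq_mul_sub_phaseThreshold hc₂.ne]
  exact mul_pos (sub_pos.2 hc₂) (sub_pos.2 hγ)

theorem spiked_limit_above_bulk_edge_general {c₁ c₂ r γ : K}
    (hr : r ^ 2 = c₁ + c₂ - c₁ * c₂) (ht : 0 < spikedDenom c₂ γ)
    (hγ : γ ≠ phaseThreshold c₂ r) : bulkEdge c₂ r < spikedLimit c₁ c₂ γ := by
  have hc₂ : c₂ ≠ 1 := by
    rintro rfl
    rw [spikedDenom_one] at ht
    exact neg_one_lt_zero.not_gt ht
  rw [← sub_pos, spikedLimit_sub_bulkEdge hc₂ hr ht.ne']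
  exact div_pos (sq_pos_of_ne_zero (sub_ne_zero.2 hγ)) ht

end OrderedField

theorem add_sub_mul_nonneg {R : Type*} [Ring R] [PartialOrder R] [IsOrderedRing R] {a b : R}
    (ha : 0 ≤ a) (hb₀ : 0 ≤ b) (hb₁ : b ≤ 1) : 0 ≤ a + b - a * b := by
  calc
    0 ≤ a * (1 - b) + b := add_nonneg (mul_nonneg ha (sub_nonneg.2 hb₁)) hb₀
    _ = a + b - a * b := by rw [mul_sub, mul_one, sub_add_eq_add_sub]

/-- Above the phase transition the spiked limit exceeds the bulk edge:
for `γ > (c₂+r)/(1−c₂)` one has `(γ+c₁)(1+γ)/(γ−(1+γ)c₂) > ((1+r)/(1−c₂))²`. -/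
theorem spiked_limit_above_bulk_edge (c₁ c₂ : ℝ)
    (hc₁ : c₁ ∈ Set.Ioo (0 : ℝ) 1) (hc₂ : c₂ ∈ Set.Ioo (0 : ℝ) 1)
    (r : ℝ) (hr : r = Real.sqrt (c₁ + c₂ - c₁ * c₂))
    (γ : ℝ) (hγ : γ > (c₂ + r) / (1 - c₂)) :
    (γ + c₁) * (1 + γ) / (γ - (1 + γ) * c₂) > ((1 + r) / (1 - c₂)) ^ 2 := by
  have hr_sq : r ^ 2 = c₁ + c₂ - c₁ * c₂ :=
    hr ▸ Real.sq_sqrt (add_sub_mul_nonneg hc₁.1.le hc₂.1.le hc₂.2.le)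
  have hr_nonneg : 0 ≤ r := hr ▸ Real.sqrt_nonneg _
  exact spiked_limit_above_bulk_edge_general hr_sq
    (hr_nonneg.trans_lt (lt_spikedDenom_of_phaseThreshold_lt hc₂.2 hγ)) hγ.ne'
end
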